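/- In the backward Riccati recursion context, for every t with 0 ≤ t ≤ T−1 and every λ > 0, (λ/2) Σ_{k=t}^{T−1} ln(G_k/(πλ)) = (λ/2)(T−t) ln(1/(πλ)) + (λ/2)(T−t) ln(B² + D²) + (λ/4)(T−t−1)(T−t) ln r, where π denotes the constant pi. -/

import Mathlib

open Matrix

/-!
The upper-left entry of `P t` evolves on its own: one step of the recursion multiplies it by the
Schur complement `r`. Hence `G_k` is a geometric sequence in `T - k`, its logarithm is an
arithmetic progression, and Gauss' formula sums it.
-/

/-- One backward step `P ↦ F - (1 / G) H Hᵀ` of the Riccati recursion, sending `P_{t+1}` to `P_t`.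
As in the paper, both off-diagonal entries of `F` are computed from `P 0 1`. -/
def riccatiStep {K : Type*} [Field K] (A B C D Abar Cbar ρ : K) (P : Matrix (Fin 2) (Fin 2) K) :
    Matrix (Fin 2) (Fin 2) K :=
  let H := ![(A * B + C * D) * P 0 0, (Abar * B + ρ * Cbar * D) * P 1 0]
  !![(A ^ 2 + C ^ 2) * P 0 0, (A * Abar + C * Cbar) * P 0 1;
     (A * Abar + C * Cbar) * P 0 1, (Abar ^ 2 + Cbar ^ 2) * P 1 1]
    - (1 / ((B ^ 2 + D ^ 2) * P 0 0)) • vecMulVec H H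

theorem riccatiStep_zero_zero {K : Type*} [Field K] (A B C D Abar Cbar ρ : K)
    (P : Matrix (Fin 2) (Fin 2) K) :
    riccatiStep A B C D Abar Cbar ρ P 0 0 =
      (A ^ 2 + C ^ 2 - (A * B + C * D) ^ 2 / (B ^ 2 + D ^ 2)) * P 0 0 := by
  have entry : riccatiStep A B C D Abar Cbar ρ P 0 0 = (A ^ 2 + C ^ 2) * P 0 0 -
      1 / ((B ^ 2 + D ^ 2) * P 0 0) * ((A * B + C * D) * P 0 0 * ((A * B + C * D) * P 0 0)) := rfl
  rw [entry, sub_mul, one_div_mul_eq_div, mul_mul_mul_comm, mul_div_mul_comm,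
    mul_self_div_self, sq (A * B + C * D)]

theorem eq_pow_mul_of_eq_mul_succ {M : Type*} [Monoid M] {u : ℕ → M} {r : M} {T : ℕ}
    (hu : ∀ t < T, u t = r * u (t + 1)) {t : ℕ} (ht : t ≤ T) : u t = r ^ (T - t) * u T := by
  induction ht using Nat.decreasingInduction with
  | self => rw [Nat.sub_self, pow_zero, one_mul]
  | of_succ t ht ih =>
    rw [hu t ht, ih, ← mul_assoc, ← pow_succ', Nat.sub_add_eq, Nat.sub_add_cancel (by omega)]

theorem sum_Ico_sub_succ {M : Type*} [AddCommMonoid M] (f : ℕ → M) (t T : ℕ) :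
    ∑ k ∈ Finset.Ico t T, f (T - (k + 1)) = ∑ j ∈ Finset.range (T - t), f j := by
  rw [Finset.sum_Ico_eq_sum_range, ← Finset.sum_range_reflect f]
  refine Finset.sum_congr rfl fun j _ ↦ congrArg f ?_
  omega

theorem sum_range_log_pow_mul {r a : ℝ} (hr : r ≠ 0) (ha : a ≠ 0) (n : ℕ) :
    ∑ j ∈ Finset.range n, Real.log (r ^ j * a) =
      n * Real.log a + n.choose 2 * Real.log r := by
  have log_term (j : ℕ) : Real.log (r ^ j * a) = j * Real.log r + Real.log a := by
    rw [Real.log_mul (pow_ne_zero j hr) ha, Real.log_pow]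
  simp only [log_term]
  rw [Finset.sum_add_distrib, ← Finset.sum_mul, ← Nat.cast_sum, Finset.sum_range_id,
    ← Nat.choose_two_right, Finset.sum_const, Finset.card_range, nsmul_eq_mul, add_comm]

theorem sum_Ico_log_of_eq_mul_succ {u : ℕ → ℝ} {r : ℝ} {T : ℕ} (hr : r ≠ 0) (huT : u T ≠ 0)
    (hu : ∀ t < T, u t = r * u (t + 1)) (t : ℕ) :
    ∑ k ∈ Finset.Ico t T, Real.log (u (k + 1)) =
      (T - t : ℕ) * Real.log (u T) + (T - t).choose 2 * Real.log r := by
  calc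
    _ = ∑ k ∈ Finset.Ico t T, Real.log (r ^ (T - (k + 1)) * u T) :=
      Finset.sum_congr rfl fun k hk ↦ by
        rw [eq_pow_mul_of_eq_mul_succ hu (Finset.mem_Ico.mp hk).2]
    _ = ∑ j ∈ Finset.range (T - t), Real.log (r ^ j * u T) :=
      sum_Ico_sub_succ (fun j ↦ Real.log (r ^ j * u T)) t T
    _ = _ := sum_range_log_pow_mul hr huT (T - t)

/-- Exploration-cost constant of Theorem 2: in the backward Riccati recursion, for every
`0 ≤ t ≤ T−1` and `λ > 0`,
`(λ/2) Σ_{k=t}^{T−1} ln(G_k/(πλ)) = (λ/2)(T−t)ln(1/(πλ)) + (λ/2)(T−t)ln(B²+D²)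
  + (λ/4)(T−t−1)(T−t) ln r`. -/
theorem stmt_14 (T : ℕ) (A B C D Abar Cbar ρ r : ℝ)
    (hBD : 0 < B ^ 2 + D ^ 2)
    (hr : r = A ^ 2 + C ^ 2 - (A * B + C * D) ^ 2 / (B ^ 2 + D ^ 2))
    (hrpos : 0 < r)
    (P : ℕ → Matrix (Fin 2) (Fin 2) ℝ)
    (hPT : P T = !![1, -1; -1, 1])
    (hrec : ∀ t, t < T →
      P t = !![(A ^ 2 + C ^ 2) * P (t + 1) 0 0,
               (A * Abar + C * Cbar) * P (t + 1) 0 1;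
               (A * Abar + C * Cbar) * P (t + 1) 0 1,
               (Abar ^ 2 + Cbar ^ 2) * P (t + 1) 1 1]
            - (1 / ((B ^ 2 + D ^ 2) * P (t + 1) 0 0)) •
                vecMulVec
                  ![(A * B + C * D) * P (t + 1) 0 0,
                    (Abar * B + ρ * Cbar * D) * P (t + 1) 1 0]
                  ![(A * B + C * D) * P (t + 1) 0 0,
                    (Abar * B + ρ * Cbar * D) * P (t + 1) 1 0]) :
    ∀ t, t < T → ∀ lam : ℝ, 0 < lam →
      (lam / 2) * ∑ k ∈ Finset.Ico t T,
          Real.log (((B ^ 2 + D ^ 2) * P (k + 1) 0 0) / (Real.pi * lam))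
        = (lam / 2) * ((T - t : ℕ) : ℝ) * Real.log (1 / (Real.pi * lam))
          + (lam / 2) * ((T - t : ℕ) : ℝ) * Real.log (B ^ 2 + D ^ 2)
          + (lam / 4) * ((T - t - 1 : ℕ) : ℝ) * ((T - t : ℕ) : ℝ) * Real.log r := by
  intro t ht lam hlam
  have hpi : Real.pi * lam ≠ 0 := (mul_pos Real.pi_pos hlam).ne'
  have hstep : ∀ k < T, P k = riccatiStep A B C D Abar Cbar ρ (P (k + 1)) := hrec
  let u : ℕ → ℝ := fun k ↦ (B ^ 2 + D ^ 2) * P k 0 0 / (Real.pi * lam)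
  have hu : ∀ k < T, u k = r * u (k + 1) := fun k hk ↦ by
    simp only [u]
    rw [hstep k hk, riccatiStep_zero_zero, ← hr, mul_left_comm, mul_div_assoc]
  have huT : u T = 1 / (Real.pi * lam) * (B ^ 2 + D ^ 2) := by
    simp only [u, hPT, of_apply, cons_val_zero, mul_one, one_div_mul_eq_div]
  have huT_ne : u T ≠ 0 := huT ▸ mul_ne_zero (one_div_ne_zero hpi) hBD.ne'
  have hsum := sum_Ico_log_of_eq_mul_succ hrpos.ne' huT_ne hu t
  rw [huT, Real.log_mul (one_div_ne_zero hpi) hBD.ne', Nat.cast_choose_two,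
    ← Nat.cast_pred (Nat.sub_pos_of_lt ht)] at hsum
  rw [hsum]
  ring
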